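/- For every prime p with 61 < p and p ≠ 79, there exists an S₁-type subset A ⊆ F_p with |A|² < p − 1 (in other words, S₁(p)² < p − 1 where S₁(p) is the minimal size of an S₁-type subset of F_p). -/

import Mathlib

/-!
The residues `⌊p / 2 ^ i⌋` for `0 ≤ i ≤ ⌊log₂ p⌋` lead from `0` to `1` in `F_p`, and twice each of
them is its predecessor or its predecessor minus `1`. Adding the negatives of these residues makes
`-1` available, and `0 = 1 + (-1)` is then a nontrivial sum too, so the symmetrized set is of
S₁-type. It has at most `2 ⌊log₂ p⌋ + 1` elements, which is below `√(p - 1)` apart from finitely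
many primes; for those above `61` other than `79` an S₁-type set is tabulated.
-/

open Finset
open scoped Nat Pointwise

/-- A finite set `A` is of S₁-type if every `a ∈ A` is the midpoint of two elements of `A`, the
first of which differs from `a`. -/
def IsS1Type {R : Type*} [Semiring R] (A : Finset R) : Prop :=
  ∀ a ∈ A, ∃ b ∈ A, ∃ c ∈ A, 2 * a = b + c ∧ b ≠ a

section Symmetrization

lemma card_union_neg_add_one_le {G : Type*} [SubtractionMonoid G] [DecidableEq G] {S : Finset G}
    (h0 : 0 ∈ S) : #(S ∪ -S) + 1 ≤ 2 * #S := by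
  have h_inter : 0 < #(S ∩ -S) := card_pos.2 ⟨0, by simpa using h0⟩
  have h_card := card_union_add_card_inter S (-S)
  rw [card_neg] at h_card
  omega

variable {R : Type*} [Ring R] [DecidableEq R]

lemma isS1Type_union_neg [Nontrivial R] {S : Finset R} (h0 : 0 ∈ S) (h1 : 1 ∈ S)
    (h : ∀ a ∈ S, a ≠ 0 → ∃ b ∈ S, b ≠ a ∧ (2 * a = b ∨ 2 * a = b - 1)) :
    IsS1Type (S ∪ -S) := by
  have h_pos {x : R} (hx : x ∈ S) : x ∈ S ∪ -S := mem_union_left _ hx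
  have h_neg {x : R} (hx : x ∈ S) : -x ∈ S ∪ -S := mem_union_right _ (neg_mem_neg hx)
  have h_mid {a : R} (ha : a ∈ S) : ∃ b ∈ S, ∃ c ∈ S, b ≠ a ∧ 2 * a = b - c := by
    rcases eq_or_ne a 0 with rfl | ha0
    · exact ⟨1, h1, 1, h1, one_ne_zero, by simp⟩
    · obtain ⟨b, hb, hba, hab | hab⟩ := h a ha ha0
      · exact ⟨b, hb, 0, h0, hba, by rw [hab, sub_zero]⟩
      · exact ⟨b, hb, 1, h1, hba, hab⟩
  intro a ha
  rcases mem_union.1 ha with ha | ha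
  · obtain ⟨b, hb, c, hc, hba, hab⟩ := h_mid ha
    exact ⟨b, h_pos hb, -c, h_neg hc, by rw [hab, sub_eq_add_neg], hba⟩
  · obtain ⟨b, hb, c, hc, hba, hab⟩ := h_mid (mem_neg'.1 ha)
    exact ⟨-b, h_neg hb, c, h_pos hc, by rw [← neg_inj, ← mul_neg, hab]; abel,
      fun hb' ↦ hba (by rw [← hb', neg_neg])⟩

end Symmetrization

section Halving

lemma two_mul_cast_div_two {R : Type*} [Ring R] (m : ℕ) :
    2 * ((m / 2 : ℕ) : R) = m ∨ 2 * ((m / 2 : ℕ) : R) = m - 1 := by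
  rcases Nat.even_or_odd' m with ⟨t, rfl | rfl⟩
  · left
    simp
  · right
    rw [show (2 * t + 1) / 2 = t by omega]
    simp

lemma cast_ne_cast_div_two {n m : ℕ} (hmn : m ≤ n) (hm : 2 ≤ m) :
    (m : ZMod n) ≠ (m / 2 : ℕ) := by
  intro h
  rw [eq_comm, ZMod.natCast_eq_natCast_iff, Nat.modEq_iff_dvd' (Nat.div_le_self m 2)] at h
  have := Nat.le_of_dvd (by omega) h
  omega

/-- The residues of `n, ⌊n / 2⌋, ⌊n / 4⌋, …, 1` modulo `n`; the first of them is `0`. -/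
def halvings (n : ℕ) : Finset (ZMod n) :=
  (range (Nat.log 2 n + 1)).image fun i ↦ ((n / 2 ^ i : ℕ) : ZMod n)

lemma card_halvings_le (n : ℕ) : #(halvings n) ≤ Nat.log 2 n + 1 :=
  card_image_le.trans_eq (card_range _)

lemma zero_mem_halvings (n : ℕ) : 0 ∈ halvings n :=
  mem_image.2 ⟨0, by simp, by simp⟩

lemma one_mem_halvings {n : ℕ} (hn : n ≠ 0) : 1 ∈ halvings n := by
  have h_last : n / 2 ^ Nat.log 2 n = 1 := by
    have h_le := Nat.pow_log_le_self 2 hn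
    have h_lt := Nat.lt_pow_succ_log_self one_lt_two n
    rw [pow_succ] at h_lt
    exact Nat.div_eq_of_lt_le (by omega) (by omega)
  exact mem_image.2 ⟨Nat.log 2 n, self_mem_range_succ _, by simp [h_last]⟩

lemma exists_double_of_mem_halvings {n : ℕ} {a : ZMod n} (ha : a ∈ halvings n) (ha0 : a ≠ 0) :
    ∃ b ∈ halvings n, b ≠ a ∧ (2 * a = b ∨ 2 * a = b - 1) := by
  obtain ⟨_ | j, hj, rfl⟩ := mem_image.1 ha
  · simp at ha0
  · have h_half : n / 2 ^ (j + 1) = n / 2 ^ j / 2 := by rw [pow_succ, Nat.div_div_eq_div_mul]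
    rw [h_half] at ha0 ⊢
    have h_two_le : 2 ≤ n / 2 ^ j := by
      by_contra! h_lt
      exact ha0 (by rw [Nat.div_eq_of_lt h_lt, Nat.cast_zero])
    exact ⟨_, mem_image_of_mem _ (mem_range.2 (Nat.lt_of_succ_lt (mem_range.1 hj))),
      cast_ne_cast_div_two (Nat.div_le_self _ _) h_two_le, two_mul_cast_div_two _⟩

theorem exists_isS1Type_card_le_log {n : ℕ} (hn : 1 < n) :
    ∃ A : Finset (ZMod n), A.Nonempty ∧ IsS1Type A ∧ #A ≤ 2 * Nat.log 2 n + 1 := by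
  have : Fact (1 < n) := ⟨hn⟩
  have h0 := zero_mem_halvings n
  refine ⟨halvings n ∪ -halvings n, ⟨0, mem_union_left _ h0⟩,
    isS1Type_union_neg h0 (one_mem_halvings (by omega))
      fun _ ↦ exists_double_of_mem_halvings, ?_⟩
  have h_card := card_union_neg_add_one_le h0
  have h_le := card_halvings_le n
  omega

lemma sq_two_mul_add_one_lt_two_pow {k : ℕ} (hk : 9 ≤ k) : (2 * k + 1) ^ 2 + 1 < 2 ^ k := by
  induction k, hk using Nat.le_induction with
  | base => norm_num
  | succ k hk ih => rw [pow_succ 2 k]; nlinarith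

lemma sq_two_mul_log_add_one_lt {n : ℕ} (hn : 2 ^ 9 ≤ n) :
    (2 * Nat.log 2 n + 1) ^ 2 < n - 1 := by
  have h_sq := sq_two_mul_add_one_lt_two_pow (Nat.le_log_of_pow_le one_lt_two hn)
  have h_pow := Nat.pow_log_le_self 2 (show n ≠ 0 by omega)
  omega

end Halving

section SmallPrimes

/-- Pairs `(p, l)` such that the residues of `l` form an S₁-type set modulo `p`, found by computer
search: one pair for each prime `p > 61`, `p ≠ 79`, with `p - 1 ≤ (2 * Nat.log 2 p + 1) ^ 2`. -/
def smallPrimeTable : List (ℕ × List ℕ) :=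
  [(67, [0, 1, 3, 16, 31, 57, 62, 66]),
   (71, [0, 1, 3, 17, 33, 44, 66, 70]),
   (73, [0, 1, 3, 11, 21, 42, 68, 72]),
   (83, [0, 1, 2, 6, 13, 43, 66, 81, 82]),
   (89, [0, 1, 2, 7, 39, 64, 76, 86, 88]),
   (97, [0, 1, 2, 7, 42, 69, 84, 94, 96]),
   (101, [0, 1, 2, 8, 15, 31, 62, 97, 100]),
   (103, [0, 1, 2, 8, 16, 56, 79, 99, 102]),
   (107, [0, 1, 2, 7, 27, 54, 94, 104, 106]),
   (109, [0, 1, 2, 8, 47, 78, 93, 105, 108]),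
   (113, [0, 1, 2, 8, 48, 81, 97, 109, 112]),
   (127, [0, 1, 2, 8, 32, 63, 111, 123, 126]),
   (131, [0, 1, 3, 11, 22, 44, 77, 126, 130]),
   (137, [0, 1, 3, 11, 53, 74, 106, 132, 136]),
   (139, [0, 1, 3, 11, 22, 43, 86, 134, 138]),
   (149, [0, 1, 3, 11, 64, 107, 128, 144, 148]),
   (151, [0, 1, 3, 11, 65, 108, 130, 146, 150]),
   (157, [0, 1, 2, 6, 13, 43, 80, 140, 155, 156]),
   (163, [0, 1, 2, 7, 27, 55, 110, 150, 160, 162]),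
   (167, [0, 1, 2, 7, 39, 78, 142, 154, 164, 166]),
   (173, [0, 1, 2, 5, 21, 85, 130, 162, 170, 172]),
   (179, [0, 1, 2, 7, 69, 124, 151, 166, 176, 178]),
   (181, [0, 1, 2, 7, 70, 125, 153, 168, 178, 180]),
   (191, [0, 1, 2, 7, 27, 55, 110, 178, 188, 190]),
   (193, [0, 1, 2, 7, 15, 51, 100, 172, 190, 192]),
   (197, [0, 1, 2, 8, 15, 53, 98, 174, 193, 196]),
   (199, [0, 1, 2, 8, 16, 88, 143, 175, 195, 198]),
   (211, [0, 1, 2, 8, 81, 146, 178, 195, 207, 210]),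
   (223, [0, 1, 2, 8, 32, 64, 127, 207, 219, 222]),
   (257, [0, 1, 2, 8, 32, 128, 193, 241, 253, 256]),
   (263, [0, 1, 3, 11, 53, 137, 200, 232, 258, 262]),
   (269, [0, 1, 3, 11, 22, 119, 194, 237, 264, 268]),
   (271, [0, 1, 3, 19, 38, 46, 73, 145, 231, 270]),
   (277, [0, 1, 3, 11, 107, 192, 235, 256, 272, 276]),
   (281, [0, 1, 3, 11, 65, 130, 238, 260, 276, 280]),
   (283, [0, 1, 2, 6, 22, 45, 88, 175, 273, 281, 282])]

/-- The residues modulo `n` of the entries of a list. -/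
def residues (n : ℕ) (l : List ℕ) : Finset (ZMod n) :=
  (l.map (↑)).toFinset

lemma smallPrimeTable_spec : ∀ e ∈ smallPrimeTable,
    (residues e.1 e.2).Nonempty ∧ IsS1Type (residues e.1 e.2) ∧
      #(residues e.1 e.2) ^ 2 < e.1 - 1 := by
  unfold IsS1Type
  decide +kernel

lemma sq_two_mul_log_add_one_lt_or_mem_smallPrimeTable_of_coprime :
    ∀ p < 2 ^ 9, 61 < p → p ≠ 79 → p.Coprime 19 ! →
      (2 * Nat.log 2 p + 1) ^ 2 < p - 1 ∨ ∃ e ∈ smallPrimeTable, e.1 = p := by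
  decide +kernel

end SmallPrimes

/-- Without the requirement that `A` be nonempty, `A = ∅` would do. -/
theorem stmt_4_general (p : ℕ) (hp : p.Prime) (h61 : 61 < p) (h79 : p ≠ 79) :
    ∃ A : Finset (ZMod p), A.Nonempty ∧ IsS1Type A ∧ #A ^ 2 < p - 1 := by
  have h_cases : (2 * Nat.log 2 p + 1) ^ 2 < p - 1 ∨ ∃ e ∈ smallPrimeTable, e.1 = p := by
    rcases lt_or_ge p (2 ^ 9) with h_small | h_large
    · exact sq_two_mul_log_add_one_lt_or_mem_smallPrimeTable_of_coprime p h_small h61 h79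
        (hp.coprime_factorial_of_lt (by omega))
    · exact .inl (sq_two_mul_log_add_one_lt h_large)
  rcases h_cases with h_log | ⟨e, he, rfl⟩
  · obtain ⟨A, hA, hS, h_card⟩ := exists_isS1Type_card_le_log hp.one_lt
    exact ⟨A, hA, hS, (Nat.pow_le_pow_left h_card 2).trans_lt h_log⟩
  · exact ⟨residues e.1 e.2, smallPrimeTable_spec e he⟩

/-- For every prime `p` with `61 < p ≠ 79` there is an S₁-type subset `A ⊆ F_p` with
`|A|² < p - 1`. -/
theorem stmt_4 (p : ℕ) (hp : p.Prime) (h61 : 61 < p) (h79 : p ≠ 79) :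
    ∃ A : Finset (ZMod p),
      (∀ a ∈ A, ∃ b ∈ A, ∃ c ∈ A, 2 * a = b + c ∧ b ≠ a) ∧
      A.card ^ 2 < p - 1 := by
  obtain ⟨A, _, hA⟩ := stmt_4_general p hp h61 h79
  exact ⟨A, hA⟩
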